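/- arXiv:2508.11556 — 4 statements merged into one kernel-verified Lean document; each statement's English description precedes it below -/
import Mathlib

section
/- Suppose each weight vector w_t (t = 1,…,T) is a standard basis vector in ℝ^{d_w}. Let y_0 ∈ {0,1} be fixed and let y, ỹ ∈ {0,1}^T (with ỹ_0 := y_0) satisfy Σ_{t=1}^T w_t y_t = Σ_{t=1}^T w_t ỹ_t and Σ_{t=1}^T w_t y_{t−1} = Σ_{t=1}^T w_t ỹ_{t−1}. Then for every A ∈ ℝ^{d_w}, P_{γ,A}(y) / P_{γ,A}(ỹ) = exp( γ Σ_{t=1}^T ( y_t y_{t−1} − ỹ_t ỹ_{t−1} ) ); in particular this ratio does not depend on A. -/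
/-- The lagged outcome `y_{t-1}` (with fixed initial value `y₀` at `t = 1`),
0-indexed in `t`. -/
def ylag {T : ℕ} (y0 : ℝ) (y : Fin T → ℝ) (t : Fin T) : ℝ :=
  if t.val = 0 then y0
  else y ⟨t.val - 1, lt_of_le_of_lt (Nat.sub_le _ _) t.isLt⟩

/-- The AR(1) logit probability of `y ∈ {0,1}^T` given `A`:
`P_{γ,A}(y) = ∏_t exp(y_t (γ y_{t-1} + w_tᵀA)) / (1 + exp(γ y_{t-1} + w_tᵀA))`. -/
noncomputable def ar1P {T dw : ℕ} (γ : ℝ) (y0 : ℝ)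
    (w : Fin T → Fin dw → ℝ) (A : Fin dw → ℝ) (y : Fin T → ℝ) : ℝ :=
  ∏ t, Real.exp (y t * (γ * ylag y0 y t + ∑ k, w t k * A k)) /
      (1 + Real.exp (γ * ylag y0 y t + ∑ k, w t k * A k))

/-!
The logarithm of `P_{γ,A}(y)` is `γ ∑ y_t y_{t-1} + ∑ (w_tᵀA) y_t` minus the log-partition term
`∑ log (1 + exp (γ y_{t-1} + w_tᵀA))`. The first condition fixes the middle sum. On `{0,1}` every
function of the lagged outcome is affine, and when the distinct weight vectors are linearly
independent its slope, a function of `w_t`, is `w_tᵀB` for some `B`. The second condition then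
fixes the log-partition term.
-/

theorem linearIndepOn_id_range_of_forall_eq_single {R ι κ : Type*} [Semiring R] [DecidableEq κ]
    {w : ι → κ → R} (hw : ∀ t, ∃ j, w t = Pi.single j 1) :
    LinearIndepOn R id (Set.range w) := by
  refine (Pi.linearIndependent_single_one κ R).linearIndepOn_id.mono ?_
  rintro _ ⟨t, rfl⟩
  obtain ⟨j, hj⟩ := hw t
  exact ⟨j, hj.symm⟩

theorem exists_forall_mem_dotProduct_eq {K κ : Type*} [Field K] [Fintype κ] {s : Set (κ → K)}
    (hs : LinearIndepOn K id s) (f : (κ → K) → K) : ∃ b, ∀ x ∈ s, x ⬝ᵥ b = f x := by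
  classical
  obtain ⟨φ, hφ⟩ : ∃ φ : (κ → K) →ₗ[K] K, ∀ x ∈ s, φ x = f x := by
    refine ⟨(Module.Basis.extend hs).constr K fun x => f x, fun x hx => ?_⟩
    have h := (Module.Basis.extend hs).constr_basis K (fun x => f x) ⟨x, hs.subset_extend _ hx⟩
    rwa [Module.Basis.extend_apply_self] at h
  obtain ⟨b, rfl⟩ := (dotProductEquiv K κ).surjective φ
  exact ⟨b, fun x hx => by rw [dotProduct_comm, ← hφ x hx, dotProductEquiv_apply_apply]⟩

section WeightedSums

variable {K ι κ : Type*} [Fintype ι] {w : ι → κ → K} {u v : ι → K}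

theorem sum_dotProduct_mul_congr [CommSemiring K] [Fintype κ]
    (h : ∀ k, ∑ t, w t k * u t = ∑ t, w t k * v t) (b : κ → K) :
    ∑ t, (w t ⬝ᵥ b) * u t = ∑ t, (w t ⬝ᵥ b) * v t := by
  have sum_eq (x : ι → K) : ∑ t, (w t ⬝ᵥ b) * x t = ∑ k, b k * ∑ t, w t k * x t := by
    simp only [dotProduct, Finset.sum_mul, Finset.mul_sum]
    rw [Finset.sum_comm]
    exact Finset.sum_congr rfl fun _ _ => Finset.sum_congr rfl fun _ _ => by ring
  simp only [sum_eq, h]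

theorem sum_congr_of_binary_of_linearIndepOn [Field K] [Finite κ]
    (hw : LinearIndepOn K id (Set.range w)) (hu : ∀ t, u t = 0 ∨ u t = 1)
    (hv : ∀ t, v t = 0 ∨ v t = 1) (h : ∀ k, ∑ t, w t k * u t = ∑ t, w t k * v t)
    (f : (κ → K) → K → K) :
    ∑ t, f (w t) (u t) = ∑ t, f (w t) (v t) := by
  cases nonempty_fintype κ
  obtain ⟨b, hb⟩ := exists_forall_mem_dotProduct_eq hw fun x => f x 1 - f x 0
  have affine {x : K} (hx : x = 0 ∨ x = 1) (t : ι) : f (w t) x = f (w t) 0 + (w t ⬝ᵥ b) * x := by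
    rw [hb _ ⟨t, rfl⟩]
    rcases hx with rfl | rfl <;> ring
  calc ∑ t, f (w t) (u t)
      = ∑ t, f (w t) 0 + ∑ t, (w t ⬝ᵥ b) * u t := by
        rw [← Finset.sum_add_distrib]
        exact Finset.sum_congr rfl fun t _ => affine (hu t) t
    _ = ∑ t, f (w t) 0 + ∑ t, (w t ⬝ᵥ b) * v t := by rw [sum_dotProduct_mul_congr h]
    _ = ∑ t, f (w t) (v t) := by
        rw [← Finset.sum_add_distrib]
        exact Finset.sum_congr rfl fun t _ => (affine (hv t) t).symm

end WeightedSums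

theorem ylag_eq_zero_or_one {T : ℕ} {y0 : ℝ} (hy0 : y0 = 0 ∨ y0 = 1) {y : Fin T → ℝ}
    (hy : ∀ t, y t = 0 ∨ y t = 1) (t : Fin T) : ylag y0 y t = 0 ∨ ylag y0 y t = 1 := by
  unfold ylag
  split_ifs
  exacts [hy0, hy _]

theorem ar1P_eq_exp {T dw : ℕ} (γ y0 : ℝ) (w : Fin T → Fin dw → ℝ) (A : Fin dw → ℝ)
    (y : Fin T → ℝ) :
    ar1P γ y0 w A y =
      Real.exp (γ * ∑ t, y t * ylag y0 y t + ∑ t, (w t ⬝ᵥ A) * y t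
        - ∑ t, Real.log (1 + Real.exp (γ * ylag y0 y t + w t ⬝ᵥ A))) := by
  rw [Finset.mul_sum, ← Finset.sum_add_distrib, ← Finset.sum_sub_distrib, Real.exp_sum]
  refine Finset.prod_congr rfl fun t _ => ?_
  rw [Real.exp_sub, Real.exp_log (by positivity)]
  congr 2
  simp only [dotProduct]
  ring

theorem stmt6_general {T dw : ℕ} (γ : ℝ) {w : Fin T → Fin dw → ℝ}
    (hw : LinearIndepOn ℝ id (Set.range w)) {y0 : ℝ} (hy0 : y0 = 0 ∨ y0 = 1)
    {y y' : Fin T → ℝ} (hy : ∀ t, y t = 0 ∨ y t = 1) (hy' : ∀ t, y' t = 0 ∨ y' t = 1)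
    (h1 : ∀ k, ∑ t, w t k * y t = ∑ t, w t k * y' t)
    (h2 : ∀ k, ∑ t, w t k * ylag y0 y t = ∑ t, w t k * ylag y0 y' t) (A : Fin dw → ℝ) :
    ar1P γ y0 w A y / ar1P γ y0 w A y' =
      Real.exp (γ * ∑ t, (y t * ylag y0 y t - y' t * ylag y0 y' t)) := by
  have index_eq : ∑ t, (w t ⬝ᵥ A) * y t = ∑ t, (w t ⬝ᵥ A) * y' t := sum_dotProduct_mul_congr h1 A
  have log_partition_eq :
      ∑ t, Real.log (1 + Real.exp (γ * ylag y0 y t + w t ⬝ᵥ A)) =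
        ∑ t, Real.log (1 + Real.exp (γ * ylag y0 y' t + w t ⬝ᵥ A)) :=
    sum_congr_of_binary_of_linearIndepOn hw (ylag_eq_zero_or_one hy0 hy)
      (ylag_eq_zero_or_one hy0 hy') h2 fun x l => Real.log (1 + Real.exp (γ * l + x ⬝ᵥ A))
  rw [ar1P_eq_exp, ar1P_eq_exp, ← Real.exp_sub, index_eq, log_partition_eq,
    Finset.sum_sub_distrib]
  congr 1
  ring

/-- Suppose each weight vector `w_t` is a standard basis vector of
`ℝ^{d_w}`. If the binary sequences `y, y'` (with the same fixed initial value `y₀`)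
satisfy `Σ_t w_t y_t = Σ_t w_t y'_t` and `Σ_t w_t y_{t-1} = Σ_t w_t y'_{t-1}`, then
for every `A`, `P_{γ,A}(y)/P_{γ,A}(y') = exp(γ Σ_t (y_t y_{t-1} - y'_t y'_{t-1}))`;
in particular the ratio does not depend on `A`. -/
theorem stmt6 {T dw : ℕ} (hT : 1 ≤ T) (hdw : 1 ≤ dw) (γ : ℝ)
    (w : Fin T → Fin dw → ℝ)
    (hw : ∀ t, ∃ j : Fin dw, w t = Pi.single j 1)
    (y0 : ℝ) (hy0 : y0 = 0 ∨ y0 = 1)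
    (y y' : Fin T → ℝ)
    (hy : ∀ t, y t = 0 ∨ y t = 1) (hy' : ∀ t, y' t = 0 ∨ y' t = 1)
    (h1 : ∀ k, ∑ t, w t k * y t = ∑ t, w t k * y' t)
    (h2 : ∀ k, ∑ t, w t k * ylag y0 y t = ∑ t, w t k * ylag y0 y' t) :
    ∀ A : Fin dw → ℝ,
      ar1P γ y0 w A y / ar1P γ y0 w A y' =
        Real.exp (γ * ∑ t, (y t * ylag y0 y t - y' t * ylag y0 y' t)) :=
  stmt6_general γ (linearIndepOn_id_range_of_forall_eq_single hw) hy0 hy hy' h1 h2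
end

section
/- For each t ∈ {1,…,T} let Q_t be the cardinality of the image of π_t, and define D := { Σ_{t=1}^T k_t w_t : k_t ∈ {0,1,…,Q_t} for each t } ⊂ ℝ^{d_w}. Then there exist a function κ : ℝ^{d_w} → (0,∞) and coefficients c : D × {0,1}^T → ℝ (not depending on A) such that for every y ∈ {0,1}^T and every A ∈ ℝ^{d_w}, P(y | A) = κ(A) · Σ_{d ∈ D} c(d, y) · exp(dᵀA). -/
/-- Conversion of a binary outcome sequence to a real vector. -/
def toR {T : ℕ} (y : Fin T → Bool) : Fin T → ℝ := fun t => if y t then 1 else 0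

/-- The history `(y_{t-1},…,y_1)` of an outcome sequence `y` before time `t`. -/
def hist {T : ℕ} (y : Fin T → ℝ) (t : Fin T) : Fin t.val → ℝ :=
  fun s => y ⟨s.val, s.isLt.trans t.isLt⟩

/-- The dynamic logit probability of `y ∈ {0,1}^T` given the fixed effect `A`:
`P(y | A) = ∏_t exp(y_t (π_t(y^{t-1}) + w_tᵀA)) / (1 + exp(π_t(y^{t-1}) + w_tᵀA))`. -/
noncomputable def dynLogitP {T dw : ℕ}
    (w : Fin T → Fin dw → ℝ) (π : (t : Fin T) → (Fin t.val → ℝ) → ℝ)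
    (A : Fin dw → ℝ) (y : Fin T → ℝ) : ℝ :=
  ∏ t, Real.exp (y t * (π t (hist y t) + ∑ k, w t k * A k)) /
      (1 + Real.exp (π t (hist y t) + ∑ k, w t k * A k))

/-- `Q_t`: the number of distinct values taken by `π_t` on binary histories. -/
noncomputable def Qval {T : ℕ} (π : (t : Fin T) → (Fin t.val → ℝ) → ℝ) (t : Fin T) : ℕ :=
  (Finset.univ.image
    (fun h : Fin t.val → Bool => π t (fun s => if h s then (1 : ℝ) else 0))).card

/-- The set `D = {Σ_t k_t w_t : k_t ∈ {0,1,…,Q_t}} ⊆ ℝ^{d_w}`. -/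
noncomputable def Dset {T dw : ℕ} (w : Fin T → Fin dw → ℝ)
    (π : (t : Fin T) → (Fin t.val → ℝ) → ℝ) : Finset (Fin dw → ℝ) :=
  Finset.image
    (fun k : (t : Fin T) → Fin (Qval π t + 1) => ∑ t, ((k t : ℕ) : ℝ) • w t)
    Finset.univ

/-! For each `t` put the logit factor over the denominator `∏ q, (1 + exp (q + wₜᵀA))`, where `q`
runs through all `Qₜ` possible values of `πₜ`. This denominator does not depend on the outcome, so
the product of the reciprocals over `t` serves as `κ`. What is left in the numerator is a product of
`Qₜ` functions from the span of `1` and `exp (wₜᵀA)`, hence a combination of the powers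
`exp (k wₜᵀA)` with `k ≤ Qₜ`; multiplying over `t` yields the exponents in `D`. -/

open Finset Pointwise

section Span

lemma pow_pair_one_subset {M : Type*} [Monoid M] (x : M) (n : ℕ) :
    ({1, x} : Set M) ^ n ⊆ (x ^ ·) '' Set.Iic n := by
  induction n with
  | zero => simp
  | succ n ih =>
    rw [pow_succ]
    rintro _ ⟨y, hy, z, rfl | rfl, rfl⟩ <;> obtain ⟨k, hk, rfl⟩ := ih hy
    · exact ⟨k, Nat.le_succ_of_le hk, (mul_one _).symm⟩
    · exact ⟨k + 1, Nat.succ_le_succ hk, pow_succ _ k⟩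

variable {ι R S : Type*} [CommSemiring R] [CommSemiring S] [Algebra R S]

lemma prod_mem_prod_submodule {s : Finset ι} {M : ι → Submodule R S} {f : ι → S}
    (hf : ∀ i ∈ s, f i ∈ M i) : ∏ i ∈ s, f i ∈ ∏ i ∈ s, M i := by
  classical
  induction s using Finset.induction_on with
  | empty => simpa only [prod_empty] using Submodule.one_le.1 le_rfl
  | insert i s hi ih =>
    rw [prod_insert hi, prod_insert hi]
    exact Submodule.mul_mem_mul (hf i (mem_insert_self i s))
      (ih fun j hj => hf j (mem_insert_of_mem hj))

lemma prod_span_pair_one_pow_le (s : Finset ι) (x : ι → S) (n : ι → ℕ) :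
    ∏ i ∈ s, Submodule.span R {1, x i} ^ n i ≤
      Submodule.span R ((fun k : ι → ℕ => ∏ i ∈ s, x i ^ k i) '' {k | ∀ i ∈ s, k i ≤ n i}) := by
  simp_rw [Submodule.span_pow, Submodule.prod_span]
  refine Submodule.span_mono fun y hy => ?_
  obtain ⟨g, hg, rfl⟩ := (Set.mem_finsetProd _ _ _).1 hy
  choose! k hk hkg using fun i (hi : i ∈ s) => pow_pair_one_subset (x i) (n i) (hg hi)
  exact ⟨k, hk, prod_congr rfl hkg⟩

end Span

section LogitFactor

/-- The numerator of the logit probability of outcome `b` with index `p + a`, over the common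
denominator `∏ q ∈ V, (1 + exp (q + a))`, written in terms of `x = exp a`. Taking `x` in an algebra
allows it to be a number as well as a function of the fixed effect. -/
noncomputable def logitNumerator {S : Type*} [CommSemiring S] [Algebra ℝ S]
    (V : Finset ℝ) (p : ℝ) (b : Bool) (x : S) : S :=
  (if b then Real.exp p • x else 1) * ∏ q ∈ V.erase p, (1 + Real.exp q • x)

variable {V : Finset ℝ} {p : ℝ}

lemma logitNumerator_mem_span_pow {S : Type*} [CommSemiring S] [Algebra ℝ S]
    (hp : p ∈ V) (b : Bool) (x : S) :
    logitNumerator V p b x ∈ Submodule.span ℝ {1, x} ^ #V := by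
  have h_one : (1 : S) ∈ Submodule.span ℝ {1, x} := Submodule.subset_span (.inl rfl)
  have h_smul (r : ℝ) : r • x ∈ Submodule.span ℝ {1, x} :=
    Submodule.smul_mem _ r (Submodule.subset_span (.inr rfl))
  rw [← card_erase_add_one hp, pow_succ', ← prod_const]
  refine Submodule.mul_mem_mul ?_
    (prod_mem_prod_submodule fun q _ => Submodule.add_mem _ h_one (h_smul _))
  split_ifs
  exacts [h_smul _, h_one]

lemma logitNumerator_apply {α : Type*} (b : Bool) (f : α → ℝ) (a : α) :
    logitNumerator V p b f a = logitNumerator V p b (f a) := by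
  cases b <;> simp [logitNumerator]

lemma logit_eq_inv_mul_logitNumerator (hp : p ∈ V) (b : Bool) (a : ℝ) :
    Real.exp ((if b then 1 else 0) * (p + a)) / (1 + Real.exp (p + a)) =
      (∏ q ∈ V, (1 + Real.exp (q + a)))⁻¹ * logitNumerator V p b (Real.exp a) := by
  have h_num : logitNumerator V p b (Real.exp a) =
      Real.exp ((if b then 1 else 0) * (p + a)) * ∏ q ∈ V.erase p, (1 + Real.exp (q + a)) := by
    cases b <;> simp [logitNumerator, Real.exp_add]
  have h_rest : ∏ q ∈ V.erase p, (1 + Real.exp (q + a)) ≠ 0 := by positivity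
  rw [h_num, ← mul_prod_erase V _ hp]
  field_simp

end LogitFactor

/-- The exponential function `A ↦ exp (dᵀA)` of the fixed effect with exponent `d`. -/
noncomputable def expDot {ι : Type*} [Fintype ι] (d : ι → ℝ) : (ι → ℝ) → ℝ :=
  fun A => Real.exp (d ⬝ᵥ A)

lemma prod_expDot_pow {ι τ : Type*} [Fintype ι] (s : Finset τ) (w : τ → ι → ℝ) (k : τ → ℕ) :
    ∏ t ∈ s, expDot (w t) ^ k t = expDot (∑ t ∈ s, (k t : ℝ) • w t) := by
  ext A
  simp [expDot, sum_dotProduct, Real.exp_sum, Real.exp_nat_mul]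

section DynamicLogit

variable {T dw : ℕ} (w : Fin T → Fin dw → ℝ) (π : (t : Fin T) → (Fin t.val → ℝ) → ℝ)

/-- The set of values of `π t` on binary histories; its cardinality is `Qval π t`. -/
noncomputable def indexValues (t : Fin T) : Finset ℝ :=
  univ.image fun h : Fin t.val → Bool => π t (toR h)

/-- The factor `κ(A)`: the reciprocal of the product of the denominators `1 + exp (q + wₜᵀA)` over
all `t` and all values `q` of `π t`. -/
noncomputable def commonFactor (A : Fin dw → ℝ) : ℝ :=
  ∏ t, (∏ q ∈ indexValues π t, (1 + Real.exp (q + w t ⬝ᵥ A)))⁻¹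

/-- The function of the fixed effect that remains of `P(y | A)` after dividing by `κ(A)`. -/
noncomputable def dynLogitNumerator (y : Fin T → Bool) : (Fin dw → ℝ) → ℝ :=
  ∏ t, logitNumerator (indexValues π t) (π t (hist (toR y) t)) (y t) (expDot (w t))

lemma hist_mem_indexValues (y : Fin T → Bool) (t : Fin T) :
    π t (hist (toR y) t) ∈ indexValues π t :=
  mem_image.2 ⟨fun s => y ⟨s.val, s.isLt.trans t.isLt⟩, mem_univ _, rfl⟩

lemma commonFactor_pos (A : Fin dw → ℝ) : 0 < commonFactor w π A := by
  unfold commonFactor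
  positivity

lemma dynLogitP_eq_commonFactor_mul (A : Fin dw → ℝ) (y : Fin T → Bool) :
    dynLogitP w π A (toR y) = commonFactor w π A * dynLogitNumerator w π y A := by
  rw [commonFactor, dynLogitNumerator, prod_apply, ← prod_mul_distrib]
  refine prod_congr rfl fun t _ => ?_
  rw [logitNumerator_apply]
  exact logit_eq_inv_mul_logitNumerator (hist_mem_indexValues π y t) (y t) (w t ⬝ᵥ A)

lemma sum_smul_mem_Dset {k : Fin T → ℕ} (hk : ∀ t, k t ≤ Qval π t) :
    ∑ t, (k t : ℝ) • w t ∈ Dset w π :=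
  mem_image.2 ⟨fun t => ⟨k t, Nat.lt_succ_of_le (hk t)⟩, mem_univ _, rfl⟩

lemma dynLogitNumerator_mem_span_expDot (y : Fin T → Bool) :
    dynLogitNumerator w π y ∈ Submodule.span ℝ (expDot '' (Dset w π : Set (Fin dw → ℝ))) := by
  have h_prod : dynLogitNumerator w π y ∈
      ∏ t, Submodule.span ℝ {1, expDot (w t)} ^ Qval π t :=
    prod_mem_prod_submodule fun t _ =>
      logitNumerator_mem_span_pow (hist_mem_indexValues π y t) (y t) _
  refine Submodule.span_mono ?_ (prod_span_pair_one_pow_le _ _ _ h_prod)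
  rintro _ ⟨k, hk, rfl⟩
  exact ⟨_, sum_smul_mem_Dset w π fun t => hk t (mem_univ t), (prod_expDot_pow _ w k).symm⟩

end DynamicLogit

/-- There exist a positive function `κ : ℝ^{d_w} → (0,∞)` and
coefficients `c : D × {0,1}^T → ℝ` (not depending on `A`) such that for every binary
outcome `y` and every `A`, `P(y|A) = κ(A) Σ_{d ∈ D} c(d,y) exp(dᵀA)`. -/
theorem stmt9 {T dw : ℕ} (hT : 1 ≤ T) (hdw : 1 ≤ dw)
    (w : Fin T → Fin dw → ℝ) (π : (t : Fin T) → (Fin t.val → ℝ) → ℝ) :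
    ∃ (κ : (Fin dw → ℝ) → ℝ) (c : {d // d ∈ Dset w π} → (Fin T → Bool) → ℝ),
      (∀ A, 0 < κ A) ∧
      ∀ (y : Fin T → Bool) (A : Fin dw → ℝ),
        dynLogitP w π A (toR y) =
          κ A * ∑ d ∈ (Dset w π).attach,
            c d y * Real.exp (∑ i, (d : Fin dw → ℝ) i * A i) := by
  choose c hc using fun y => Submodule.mem_span_image_finset_iff_exists_fun ℝ |>.1
    (dynLogitNumerator_mem_span_expDot w π y)
  refine ⟨commonFactor w π, fun d y => c y d, commonFactor_pos w π, fun y A => ?_⟩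
  rw [dynLogitP_eq_commonFactor_mul, ← hc y, Finset.sum_apply]
  rfl
end

section
/- Consider the AR(p) logit model with general fixed effects: fix p ≥ 1, γ_1,…,γ_p ∈ ℝ, weight vectors w_1,…,w_T ∈ ℝ^{d_w} each of which is a standard basis vector, and fixed initial values y_0,…,y_{1−p} ∈ {0,1}; for y ∈ {0,1}^T (extended by the initial values, identically for all sequences considered) and A ∈ ℝ^{d_w}, define P(y | A) := ∏_{t=1}^T exp(y_t (Σ_{r=1}^p γ_r y_{t−r} + w_tᵀA)) / (1 + exp(Σ_{r=1}^p γ_r y_{t−r} + w_tᵀA)). Let y, ỹ ∈ {0,1}^T satisfy: (i) Σ_{t=1}^T w_t y_t = Σ_{t=1}^T w_t ỹ_t; and (ii) for every l ∈ {1,…,p} and every strictly increasing tuple 1 ≤ i_1 < … < i_l ≤ p, Σ_{t=1}^T w_t ∏_{j=1}^l y_{t−i_j} = Σ_{t=1}^T w_t ∏_{j=1}^l ỹ_{t−i_j}. Then for every A ∈ ℝ^{d_w}, P(y | A) / P(ỹ | A) = exp( Σ_{t=1}^T [ y_t Σ_{r=1}^p γ_r y_{t−r} − ỹ_t Σ_{r=1}^p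 γ_r ỹ_{t−r} ] ); in particular this ratio does not depend on A. -/
/-- The lagged outcome `y_{t-r}` in an AR(p) model (0-indexed `t : Fin T`, lag
`r.val + 1` for `r : Fin p`), where `yinit i` is the fixed initial value `y_{-i}`
(so `yinit 0 = y_0, …, yinit (p-1) = y_{1-p}`). -/
def lagAR {T p : ℕ} (yinit : Fin p → ℝ) (y : Fin T → ℝ) (t : Fin T) (r : Fin p) : ℝ :=
  if h : r.val < t.val then
    y ⟨t.val - r.val - 1, lt_of_le_of_lt (le_trans (Nat.sub_le _ _) (Nat.sub_le _ _)) t.isLt⟩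
  else yinit ⟨r.val - t.val, lt_of_le_of_lt (Nat.sub_le _ _) r.isLt⟩

/-- The AR(p) logit probability with general fixed effects:
`P(y|A) = ∏_t exp(y_t (Σ_r γ_r y_{t-r} + w_tᵀA)) / (1 + exp(Σ_r γ_r y_{t-r} + w_tᵀA))`. -/
noncomputable def arpPW {T p dw : ℕ} (γ : Fin p → ℝ) (w : Fin T → Fin dw → ℝ)
    (yinit : Fin p → ℝ) (A : Fin dw → ℝ) (y : Fin T → ℝ) : ℝ :=
  ∏ t, Real.exp (y t * ((∑ r, γ r * lagAR yinit y t r) + ∑ k, w t k * A k)) /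
      (1 + Real.exp ((∑ r, γ r * lagAR yinit y t r) + ∑ k, w t k * A k))

/-!
After taking logarithms, the part of the likelihood linear in `A` is `∑ t, y t * ⟨w t, A⟩`, which
condition (i) fixes. The rest is the normalizer `∏ t, (1 + exp (index t))`, whose logarithm is a
sum over the basis vectors `k` of functions of the binary lag vector at the times with `w t = e_k`.
A function on `{0,1}^p` is a multilinear polynomial, so its sum is determined by the multilinear
moments in condition (ii). Hence both normalizers agree and cancel.
-/

section DotProduct

variable {R κ : Type*} [Fintype κ]

theorem apply_dotProduct_eq_sum_mul_apply [NonAssocSemiring R] [DecidableEq κ] {v : κ → R}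
    (hv : ∃ j, v = Pi.single j 1) (φ : R → R) (A : κ → R) :
    φ (∑ k, v k * A k) = ∑ k, v k * φ (A k) := by
  obtain ⟨j, rfl⟩ := hv
  simp [Pi.single_apply]

theorem sum_mul_dotProduct_eq_of_sum_mul_eq {τ : Type*} [Fintype τ] [CommSemiring R]
    {w : τ → κ → R} {y y' : τ → R} (h : ∀ k, ∑ t, w t k * y t = ∑ t, w t k * y' t)
    (A : κ → R) : ∑ t, y t * ∑ k, w t k * A k = ∑ t, y' t * ∑ k, w t k * A k := by
  have hvecMul : Matrix.vecMul y w = Matrix.vecMul y' w := by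
    funext k
    simpa only [Matrix.vecMul, dotProduct, mul_comm (w _ k)] using h k
  calc y ⬝ᵥ Matrix.mulVec w A = Matrix.vecMul y w ⬝ᵥ A := Matrix.dotProduct_mulVec y w A
    _ = Matrix.vecMul y' w ⬝ᵥ A := by rw [hvecMul]
    _ = y' ⬝ᵥ Matrix.mulVec w A := (Matrix.dotProduct_mulVec y' w A).symm

end DotProduct

section BinaryMoments

open Finset

theorem exists_eq_sum_powerset {ι M : Type*} [AddCommGroup M] (f : Finset ι → M) :
    ∃ c : Finset ι → M, ∀ s, f s = ∑ u ∈ s.powerset, c u := by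
  classical
  let c : Finset ι → M := strongInduction fun s ih ↦
    f s - ∑ u ∈ s.ssubsets.attach, ih u (mem_ssubsets.mp u.2)
  have c_eq (s : Finset ι) : c s = f s - ∑ u ∈ s.ssubsets, c u := by
    rw [← sum_attach]
    exact strongInduction_eq _ s
  refine ⟨c, fun s ↦ ?_⟩
  rw [← sum_erase_add _ _ (mem_powerset_self s), c_eq s, ← ssubsets, add_sub_cancel]

variable {R ι κ τ : Type*} [CommRing R]

theorem exists_eq_sum_mul_prod_of_zero_or_one [Fintype ι] (F : (ι → R) → R) :
    ∃ c : Finset ι → R, ∀ x : ι → R, (∀ i, x i = 0 ∨ x i = 1) →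
      F x = ∑ S, c S * ∏ i ∈ S, x i := by
  classical
  obtain ⟨c, hc⟩ := exists_eq_sum_powerset fun s : Finset ι ↦ F fun i ↦ if i ∈ s then 1 else 0
  refine ⟨c, fun x hx ↦ ?_⟩
  obtain ⟨s, rfl⟩ : ∃ s : Finset ι, x = fun i ↦ if i ∈ s then 1 else 0 := by
    refine ⟨univ.filter (x · = 1), funext fun i ↦ ?_⟩
    rcases hx i with h | h <;> simp [h]
  rw [hc s, ← filter_subset_univ, sum_filter]
  simp only [prod_boole, mul_ite, mul_one, mul_zero, subset_iff]

variable [Fintype τ] {x x' : τ → ι → R}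

theorem sum_mul_apply_eq_of_sum_mul_prod_eq [Finite ι] {a : τ → R}
    (hx : ∀ t i, x t i = 0 ∨ x t i = 1) (hx' : ∀ t i, x' t i = 0 ∨ x' t i = 1)
    (h : ∀ S : Finset ι, S.Nonempty → ∑ t, a t * ∏ i ∈ S, x t i = ∑ t, a t * ∏ i ∈ S, x' t i)
    (F : (ι → R) → R) : ∑ t, a t * F (x t) = ∑ t, a t * F (x' t) := by
  have := Fintype.ofFinite ι
  obtain ⟨c, hc⟩ := exists_eq_sum_mul_prod_of_zero_or_one F
  have expand (z : τ → ι → R) (hz : ∀ t i, z t i = 0 ∨ z t i = 1) :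
      ∑ t, a t * F (z t) = ∑ S, c S * ∑ t, a t * ∏ i ∈ S, z t i := by
    simp_rw [hc _ (hz _), mul_sum, mul_left_comm (a _)]
    exact sum_comm
  rw [expand x hx, expand x' hx']
  refine sum_congr rfl fun S _ ↦ ?_
  rcases S.eq_empty_or_nonempty with rfl | hS
  · simp only [prod_empty]
  · rw [h S hS]

theorem sum_apply_dotProduct_eq_of_sum_mul_prod_eq [Finite ι] [Fintype κ] [DecidableEq κ]
    {w : τ → κ → R} (hw : ∀ t, ∃ j, w t = Pi.single j 1)
    (hx : ∀ t i, x t i = 0 ∨ x t i = 1) (hx' : ∀ t i, x' t i = 0 ∨ x' t i = 1)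
    (h : ∀ S : Finset ι, S.Nonempty → ∀ k,
      ∑ t, w t k * ∏ i ∈ S, x t i = ∑ t, w t k * ∏ i ∈ S, x' t i)
    (G : (ι → R) → R → R) (A : κ → R) :
    ∑ t, G (x t) (∑ k, w t k * A k) = ∑ t, G (x' t) (∑ k, w t k * A k) := by
  simp_rw [fun t z ↦ apply_dotProduct_eq_sum_mul_apply (hw t) (G z) A]
  rw [sum_comm, sum_comm (f := fun t k ↦ w t k * G (x' t) (A k))]
  exact sum_congr rfl fun k _ ↦
    sum_mul_apply_eq_of_sum_mul_prod_eq hx hx' (fun S hS ↦ h S hS k) (G · (A k))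

end BinaryMoments

section Logit

open Real

variable {τ ι κ : Type*} [Fintype τ]

/-- The likelihood of the outcomes `y` in a binary logit model with index `v t` at time `t`,
abstracting `arpPW` from the form of its index. Outcomes are encoded as real numbers. -/
noncomputable def logitLikelihood (v y : τ → ℝ) : ℝ :=
  ∏ t, exp (y t * v t) / (1 + exp (v t))

theorem logitLikelihood_eq_exp_div (v y : τ → ℝ) :
    logitLikelihood v y = exp (∑ t, y t * v t) / exp (∑ t, log (1 + exp (v t))) := by
  have exp_log_one_add_exp (t : τ) : exp (log (1 + exp (v t))) = 1 + exp (v t) :=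
    exp_log (by positivity)
  simp_rw [logitLikelihood, Finset.prod_div_distrib, exp_sum, exp_log_one_add_exp]

theorem logitLikelihood_div_logitLikelihood {v v' : τ → ℝ}
    (h : ∑ t, log (1 + exp (v t)) = ∑ t, log (1 + exp (v' t))) (y y' : τ → ℝ) :
    logitLikelihood v y / logitLikelihood v' y' = exp (∑ t, y t * v t - ∑ t, y' t * v' t) := by
  rw [logitLikelihood_eq_exp_div, logitLikelihood_eq_exp_div, h,
    div_div_div_cancel_right₀ (exp_ne_zero _), exp_sub]

theorem stmt14_general [Finite ι] [Fintype κ] [DecidableEq κ] (f : (ι → ℝ) → ℝ) {w : τ → κ → ℝ}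
    (hw : ∀ t, ∃ j, w t = Pi.single j 1) {x x' : τ → ι → ℝ}
    (hx : ∀ t i, x t i = 0 ∨ x t i = 1) (hx' : ∀ t i, x' t i = 0 ∨ x' t i = 1) {y y' : τ → ℝ}
    (h1 : ∀ k, ∑ t, w t k * y t = ∑ t, w t k * y' t)
    (h2 : ∀ S : Finset ι, S.Nonempty → ∀ k,
      ∑ t, w t k * ∏ i ∈ S, x t i = ∑ t, w t k * ∏ i ∈ S, x' t i) (A : κ → ℝ) :
    logitLikelihood (fun t ↦ f (x t) + ∑ k, w t k * A k) y /
        logitLikelihood (fun t ↦ f (x' t) + ∑ k, w t k * A k) y' =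
      exp (∑ t, (y t * f (x t) - y' t * f (x' t))) := by
  have hnormalizer := sum_apply_dotProduct_eq_of_sum_mul_prod_eq hw hx hx' h2
    (fun z a ↦ log (1 + exp (f z + a))) A
  rw [logitLikelihood_div_logitLikelihood hnormalizer]
  simp_rw [mul_add, Finset.sum_add_distrib, Finset.sum_sub_distrib]
  rw [sum_mul_dotProduct_eq_of_sum_mul_eq h1 A, add_sub_add_right_eq_sub]

end Logit

theorem lagAR_eq_zero_or_one {T p : ℕ} {yinit : Fin p → ℝ} {y : Fin T → ℝ}
    (hyinit : ∀ i, yinit i = 0 ∨ yinit i = 1) (hy : ∀ t, y t = 0 ∨ y t = 1)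
    (t : Fin T) (r : Fin p) : lagAR yinit y t r = 0 ∨ lagAR yinit y t r = 1 := by
  unfold lagAR
  split
  · exact hy _
  · exact hyinit _

theorem arpPW_eq_logitLikelihood {T p dw : ℕ} (γ : Fin p → ℝ) (w : Fin T → Fin dw → ℝ)
    (yinit : Fin p → ℝ) (A : Fin dw → ℝ) (y : Fin T → ℝ) :
    arpPW γ w yinit A y =
      logitLikelihood (fun t ↦ (∑ r, γ r * lagAR yinit y t r) + ∑ k, w t k * A k) y :=
  rfl

/-- In the AR(p) logit model with standard-basis weight vectors and
fixed initial values, if `y, y'` satisfy (i) `Σ_t w_t y_t = Σ_t w_t y'_t` and (ii) for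
every nonempty increasing tuple `1 ≤ i_1 < … < i_l ≤ p` (i.e. nonempty subset `S` of
lags) `Σ_t w_t Π_{r ∈ S} y_{t-r} = Σ_t w_t Π_{r ∈ S} y'_{t-r}`, then for every `A`,
`P(y|A)/P(y'|A) = exp(Σ_t [y_t Σ_r γ_r y_{t-r} - y'_t Σ_r γ_r y'_{t-r}])`;
in particular the ratio does not depend on `A`. -/
theorem stmt14 {T p dw : ℕ} (hT : 1 ≤ T) (hp : 1 ≤ p) (hdw : 1 ≤ dw)
    (γ : Fin p → ℝ) (w : Fin T → Fin dw → ℝ)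
    (hw : ∀ t, ∃ j : Fin dw, w t = Pi.single j 1)
    (yinit : Fin p → ℝ) (hyinit : ∀ i, yinit i = 0 ∨ yinit i = 1)
    (y y' : Fin T → ℝ)
    (hy : ∀ t, y t = 0 ∨ y t = 1) (hy' : ∀ t, y' t = 0 ∨ y' t = 1)
    (h1 : ∀ k, ∑ t, w t k * y t = ∑ t, w t k * y' t)
    (h2 : ∀ S : Finset (Fin p), S.Nonempty → ∀ k,
      ∑ t, w t k * ∏ r ∈ S, lagAR yinit y t r =
        ∑ t, w t k * ∏ r ∈ S, lagAR yinit y' t r) :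
    ∀ A : Fin dw → ℝ,
      arpPW γ w yinit A y / arpPW γ w yinit A y' =
        Real.exp (∑ t, (y t * ∑ r, γ r * lagAR yinit y t r -
          y' t * ∑ r, γ r * lagAR yinit y' t r)) := by
  simpa only [arpPW_eq_logitLikelihood] using stmt14_general (fun z ↦ ∑ r, γ r * z r) hw
    (lagAR_eq_zero_or_one hyinit hy) (lagAR_eq_zero_or_one hyinit hy') h1 h2
end

section
/- Consider the AR(1) logit model with covariates and general fixed effects: fix γ ∈ ℝ, β ∈ ℝ^{d_x}, and weight vectors w_1,…,w_T ∈ ℝ^{d_w} each of which is a standard basis vector; for y_0 ∈ {0,1}, covariates x = (x_1,…,x_T) ∈ (ℝ^{d_x})^T, y ∈ {0,1}^T and A ∈ ℝ^{d_w}, define P(y | y_0, x, A) := ∏_{t=1}^T exp(y_t (γ y_{t−1} + x_tᵀβ + w_tᵀA)) / (1 + exp(γ y_{t−1} + x_tᵀβ + w_tᵀA)). Then: (a) for all y, y_0, x, A, P(y | y_0, x, A) = P(𝟙 − y | 1 − y_0, −x, −A − γ𝟙_{d_w}), where 𝟙 − y denotes the componentwise complement, −x = (−x_1,…,−x_T),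 and 𝟙_{d_w} is the all-ones vector in ℝ^{d_w}; and (b) consequently, if a function m(y, y_0, x) satisfies Σ_{y ∈ {0,1}^T} m(y, y_0, x) P(y | y_0, x, A) = 0 for all y_0 ∈ {0,1}, all x ∈ (ℝ^{d_x})^T, and all A ∈ ℝ^{d_w}, then the function m̃(y, y_0, x) := m(𝟙 − y, 1 − y_0, −x) also satisfies Σ_{y ∈ {0,1}^T} m̃(y, y_0, x) P(y | y_0, x, A) = 0 for all y_0, x, A. -/
/-- Conversion of a binary value to a real number. -/
def b2r (x : Bool) : ℝ := if x then 1 else 0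

/-- The lagged outcome `y_{t-1}` (with fixed initial value `y₀` at `t = 1`),
0-indexed in `t`. -/
def blag {T : ℕ} (y0 : Bool) (y : Fin T → Bool) (t : Fin T) : Bool :=
  if t.val = 0 then y0
  else y ⟨t.val - 1, lt_of_le_of_lt (Nat.sub_le _ _) t.isLt⟩

/-- The AR(1) logit probability with covariates and general fixed effects:
`P(y | y₀, x, A) = ∏_t exp(y_t (γ y_{t-1} + x_tᵀβ + w_tᵀA)) /
(1 + exp(γ y_{t-1} + x_tᵀβ + w_tᵀA))`. -/
noncomputable def ar1PX {T dw dx : ℕ} (γ : ℝ) (β : Fin dx → ℝ)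
    (w : Fin T → Fin dw → ℝ) (y0 : Bool) (x : Fin T → Fin dx → ℝ)
    (A : Fin dw → ℝ) (y : Fin T → Bool) : ℝ :=
  ∏ t, Real.exp (b2r (y t) *
        (γ * b2r (blag y0 y t) + (∑ i, x t i * β i) + ∑ k, w t k * A k)) /
      (1 + Real.exp (γ * b2r (blag y0 y t) + (∑ i, x t i * β i) + ∑ k, w t k * A k))

/-- The likelihood `exp (b z) / (1 + exp z)` of the outcome `b` in a binary logit model with linear
index `z`. The outcome is real-valued so that the symmetry `b ↦ 1 - b` can be stated algebraically;
it is a probability for `b = 0, 1`. -/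
noncomputable def logitProb (b z : ℝ) : ℝ :=
  Real.exp (b * z) / (1 + Real.exp z)

theorem logitProb_one_sub_neg (b z : ℝ) : logitProb (1 - b) (-z) = logitProb b z := by
  have hnum : Real.exp z * Real.exp ((1 - b) * -z) = Real.exp (b * z) := by
    rw [← Real.exp_add]
    congr 1
    ring
  have hden : Real.exp z * (1 + Real.exp (-z)) = 1 + Real.exp z := by
    rw [mul_add, mul_one, ← Real.exp_add, add_neg_cancel, Real.exp_zero, add_comm]
  calc logitProb (1 - b) (-z)
      = Real.exp z * Real.exp ((1 - b) * -z) / (Real.exp z * (1 + Real.exp (-z))) :=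
        (mul_div_mul_left _ _ (Real.exp_ne_zero z)).symm
    _ = logitProb b z := by rw [hnum, hden, logitProb]

theorem b2r_not (b : Bool) : b2r (!b) = 1 - b2r b := by
  cases b <;> simp [b2r]

section AR1

variable {T dw dx : ℕ}

theorem blag_compl (y0 : Bool) (y : Fin T → Bool) (t : Fin T) :
    blag (!y0) yᶜ t = !blag y0 y t :=
  (apply_ite not _ _ _).symm

/-- The linear index `γ y_{t-1} + x_tᵀβ + w_tᵀA` of the logit model in period `t`, the quantity that
changes sign under complementation of the outcomes. -/
def ar1Index (γ : ℝ) (β : Fin dx → ℝ) (w : Fin T → Fin dw → ℝ) (y0 : Bool)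
    (x : Fin T → Fin dx → ℝ) (A : Fin dw → ℝ) (y : Fin T → Bool) (t : Fin T) : ℝ :=
  γ * b2r (blag y0 y t) + (∑ i, x t i * β i) + ∑ k, w t k * A k

/-- A moment function of the model at the parameters `γ`, `β`: its mean vanishes for every initial
value, every covariate path and every value of the fixed effects `A`, on which `m` itself does not
depend. -/
def IsMomentFunction (γ : ℝ) (β : Fin dx → ℝ) (w : Fin T → Fin dw → ℝ)
    (m : (Fin T → Bool) → Bool → (Fin T → Fin dx → ℝ) → ℝ) : Prop :=
  ∀ (y0 : Bool) (x : Fin T → Fin dx → ℝ) (A : Fin dw → ℝ),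
    ∑ y : Fin T → Bool, m y y0 x * ar1PX γ β w y0 x A y = 0

variable {γ : ℝ} {w : Fin T → Fin dw → ℝ} {c : Fin dw → ℝ}

theorem ar1PX_eq_prod_logitProb (β : Fin dx → ℝ) (y0 : Bool) (x : Fin T → Fin dx → ℝ)
    (A : Fin dw → ℝ) (y : Fin T → Bool) :
    ar1PX γ β w y0 x A y = ∏ t, logitProb (b2r (y t)) (ar1Index γ β w y0 x A y t) :=
  rfl

-- Complementing the lag turns `γ y_{t-1}` into `γ - γ y_{t-1}`; the shift of `A` by `c` absorbs
-- the extra `γ`.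
theorem ar1Index_compl {t : Fin T} (hc : ∑ k, w t k * c k = γ) (β : Fin dx → ℝ) (y0 : Bool)
    (x : Fin T → Fin dx → ℝ) (A : Fin dw → ℝ) (y : Fin T → Bool) :
    ar1Index γ β w (!y0) (-x) (-A - c) yᶜ t = -ar1Index γ β w y0 x A y t := by
  have hx : ∑ i, (-x) t i * β i = -∑ i, x t i * β i := by
    simp only [Pi.neg_apply, neg_mul, Finset.sum_neg_distrib]
  have hA : ∑ k, w t k * (-A - c) k = -∑ k, w t k * A k - γ := by
    simp only [Pi.sub_apply, Pi.neg_apply, mul_sub, mul_neg, Finset.sum_sub_distrib,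
      Finset.sum_neg_distrib, hc]
  rw [ar1Index, ar1Index, blag_compl, b2r_not, hx, hA]
  ring

theorem ar1PX_compl (hc : ∀ t, ∑ k, w t k * c k = γ) (β : Fin dx → ℝ) (y0 : Bool)
    (x : Fin T → Fin dx → ℝ) (A : Fin dw → ℝ) (y : Fin T → Bool) :
    ar1PX γ β w (!y0) (-x) (-A - c) yᶜ = ar1PX γ β w y0 x A y := by
  simp only [ar1PX_eq_prod_logitProb, ar1Index_compl (hc _), Pi.compl_apply, Bool.compl_eq_bnot,
    b2r_not, logitProb_one_sub_neg]

theorem sum_compl_mul_ar1PX (hc : ∀ t, ∑ k, w t k * c k = γ) (β : Fin dx → ℝ) (y0 : Bool)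
    (x : Fin T → Fin dx → ℝ) (A : Fin dw → ℝ) (f : (Fin T → Bool) → ℝ) :
    ∑ y, f yᶜ * ar1PX γ β w y0 x A y = ∑ y, f y * ar1PX γ β w (!y0) (-x) (-A - c) y := by
  simp only [← ar1PX_compl hc β y0 x A]
  exact compl_bijective.sum_comp fun y => f y * ar1PX γ β w (!y0) (-x) (-A - c) y

theorem IsMomentFunction.compl (hc : ∀ t, ∑ k, w t k * c k = γ) {β : Fin dx → ℝ}
    {m : (Fin T → Bool) → Bool → (Fin T → Fin dx → ℝ) → ℝ} (hm : IsMomentFunction γ β w m) :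
    IsMomentFunction γ β w fun y y0 x => m yᶜ (!y0) (-x) := fun y0 x A =>
  (sum_compl_mul_ar1PX hc β y0 x A fun y => m y (!y0) (-x)).trans (hm (!y0) (-x) (-A - c))

end AR1

theorem stmt16_general {T dw dx : ℕ} (γ : ℝ) (β : Fin dx → ℝ) (w : Fin T → Fin dw → ℝ)
    (c : Fin dw → ℝ) (hc : ∀ t, ∑ k, w t k * c k = γ) :
    (∀ (y : Fin T → Bool) (y0 : Bool) (x : Fin T → Fin dx → ℝ) (A : Fin dw → ℝ),
      ar1PX γ β w y0 x A y = ar1PX γ β w (!y0) (-x) (-A - c) yᶜ) ∧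
    (∀ m : (Fin T → Bool) → Bool → (Fin T → Fin dx → ℝ) → ℝ, IsMomentFunction γ β w m →
      IsMomentFunction γ β w fun y y0 x => m yᶜ (!y0) (-x)) :=
  ⟨fun y y0 x A => (ar1PX_compl hc β y0 x A y).symm, fun _ => IsMomentFunction.compl hc⟩

/-- In the AR(1) logit model with covariates and standard-basis
weight vectors: (a) `P(y | y₀, x, A) = P(𝟙 - y | 1 - y₀, -x, -A - γ𝟙)` for all
`y, y₀, x, A`; and (b) consequently, if `m(y, y₀, x)` is a fixed-effect-free moment
function, then so is `m̃(y, y₀, x) := m(𝟙 - y, 1 - y₀, -x)`. -/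
theorem stmt16 {T dw dx : ℕ} (hT : 1 ≤ T) (hdw : 1 ≤ dw) (hdx : 1 ≤ dx)
    (γ : ℝ) (β : Fin dx → ℝ) (w : Fin T → Fin dw → ℝ)
    (hw : ∀ t, ∃ j : Fin dw, w t = Pi.single j 1) :
    (∀ (y : Fin T → Bool) (y0 : Bool) (x : Fin T → Fin dx → ℝ) (A : Fin dw → ℝ),
      ar1PX γ β w y0 x A y =
        ar1PX γ β w (!y0) (fun t i => -(x t i)) (fun k => -(A k) - γ)
          (fun t => !(y t))) ∧
    (∀ m : (Fin T → Bool) → Bool → (Fin T → Fin dx → ℝ) → ℝ,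
      (∀ (y0 : Bool) (x : Fin T → Fin dx → ℝ) (A : Fin dw → ℝ),
        ∑ y : Fin T → Bool, m y y0 x * ar1PX γ β w y0 x A y = 0) →
      (∀ (y0 : Bool) (x : Fin T → Fin dx → ℝ) (A : Fin dw → ℝ),
        ∑ y : Fin T → Bool,
          m (fun t => !(y t)) (!y0) (fun t i => -(x t i)) * ar1PX γ β w y0 x A y = 0)) := by
  exact stmt16_general γ β w (fun _ => γ) fun t =>
    (hw t).elim fun j hj => by simp [hj, ← Finset.sum_mul]
end
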